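/- Let j = min{i ∈ [t] : m_i = m_t} and let d = n_1 + ... + n_{j−1} + δ + 1 for some 0 ≤ δ ≤ n_j − 1. Let h = max{i ∈ [t] : n_i > m_t}; assume that such an h exists (i.e., h ∈ [t]) and that m_h ≥ m_t · (n_j + n_{j+1} + ... + n_t − δ). If q > t − h, then there exist MSRD codes 𝒞_n ⊆ 𝒞_{n−1} ⊆ ... ⊆ 𝒞_{d+1} ⊆ 𝒞_d ⊆ 𝕄 with d(𝒞_i) = i for all d ≤ i ≤ n, where n = n_1 + ... + n_t. -/

import Mathlib

open Module

variable {F : Type*} [Field F] [Fintype F] {t : ℕ} {m n : Fin t → ℕ}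

/-- The sum-rank weight of an element of `𝕄 = F^{m 0 × n 0} × ⋯ × F^{m (t-1) × n (t-1)}`. -/
noncomputable def srk (C : ∀ i : Fin t, Matrix (Fin (m i)) (Fin (n i)) F) : ℕ :=
  ∑ i, (C i).rank

/-- The maximum sum-rank of a code. -/
noncomputable def maxsrk (𝒞 : Submodule F (∀ i : Fin t, Matrix (Fin (m i)) (Fin (n i)) F)) : ℕ :=
  sSup {w | ∃ C ∈ 𝒞, srk C = w}

/-- The minimum distance of a code. -/
noncomputable def minDist (𝒞 : Submodule F (∀ i : Fin t, Matrix (Fin (m i)) (Fin (n i)) F)) : ℕ :=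
  sInf {w | ∃ C ∈ 𝒞, C ≠ 0 ∧ srk C = w}

/-- The maximum rank of a subspace of a matrix space. -/
noncomputable def maxrank {a b : ℕ} (𝒜 : Submodule F (Matrix (Fin a) (Fin b) F)) : ℕ :=
  sSup {w | ∃ A ∈ 𝒜, A.rank = w}

/-- Optimal anticodes in a single matrix space. -/
def IsOptAnticode {a b : ℕ} (𝒜 : Submodule F (Matrix (Fin a) (Fin b) F)) : Prop :=
  Module.finrank F 𝒜 = a * maxrank 𝒜

/-- The weight of a sum-rank metric code: the minimum of `maxsrk` over products of
optimal anticodes containing it. -/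
noncomputable def codeWt (𝒞 : Submodule F (∀ i : Fin t, Matrix (Fin (m i)) (Fin (n i)) F)) : ℕ :=
  sInf {w | ∃ 𝒜 : ∀ i : Fin t, Submodule F (Matrix (Fin (m i)) (Fin (n i)) F),
    (∀ i, IsOptAnticode (𝒜 i)) ∧ 𝒞 ≤ Submodule.pi Set.univ 𝒜 ∧
      maxsrk (Submodule.pi Set.univ 𝒜) = w}

/-- The `r`-th generalized sum-rank weight of a code. -/
noncomputable def gw (𝒞 : Submodule F (∀ i : Fin t, Matrix (Fin (m i)) (Fin (n i)) F))
    (r : ℕ) : ℕ :=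
  sInf {w | ∃ 𝒟 : Submodule F (∀ i : Fin t, Matrix (Fin (m i)) (Fin (n i)) F),
    𝒟 ≤ 𝒞 ∧ r ≤ Module.finrank F 𝒟 ∧ codeWt 𝒟 = w}

/-- Maximum sum-rank distance (MSRD) codes. -/
def IsMSRD (𝒞 : Submodule F (∀ i : Fin t, Matrix (Fin (m i)) (Fin (n i)) F)) : Prop :=
  ∃ j : Fin t, ∃ δ : ℕ, δ + 1 ≤ n j ∧
    minDist 𝒞 = ∑ i ∈ Finset.Iio j, n i + δ + 1 ∧
    Module.finrank F 𝒞 + δ * m j = ∑ i ∈ Finset.Ici j, m i * n i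

/-- Injective linear maps exist between finite-dimensional spaces when dimensions allow. -/
theorem aux_exists_inj {K V W : Type*} [Field K] [AddCommGroup V] [Module K V] [AddCommGroup W]
    [Module K W] [FiniteDimensional K V] [FiniteDimensional K W]
    (hle : Module.finrank K V ≤ Module.finrank K W) :
    ∃ f : V →ₗ[K] W, Function.Injective f := by
  let bV := Module.finBasis K V
  let bW := Module.finBasis K W
  refine ⟨bV.constr K (fun i => bW (Fin.castLE hle i)), ?_⟩
  exact bV.injective_constr_of_linearIndependent
    (bW.linearIndependent.comp _ (Fin.castLE_injective hle))

theorem aux_ker_comp {K V W U : Type*} [Field K] [AddCommGroup V] [Module K V] [AddCommGroup W]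
    [Module K W] [AddCommGroup U] [Module K U] [FiniteDimensional K V] [FiniteDimensional K W]
    (g : W →ₗ[K] U) (f : V →ₗ[K] W) :
    Module.finrank K (LinearMap.ker (g ∘ₗ f)) ≤
      Module.finrank K (LinearMap.ker g) + Module.finrank K (LinearMap.ker f) := by
  let φ : LinearMap.ker (g ∘ₗ f) →ₗ[K] LinearMap.ker g :=
    LinearMap.codRestrict _ (f ∘ₗ (LinearMap.ker (g ∘ₗ f)).subtype) (fun x => x.2)
  have h1 := LinearMap.finrank_range_add_finrank_ker φ
  have h2 : Module.finrank K (LinearMap.range φ) ≤ Module.finrank K (LinearMap.ker g) :=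
    Submodule.finrank_le _
  have h3 : Module.finrank K (LinearMap.ker φ) ≤ Module.finrank K (LinearMap.ker f) := by
    let ψ : LinearMap.ker φ →ₗ[K] LinearMap.ker f :=
      LinearMap.codRestrict _ ((LinearMap.ker (g ∘ₗ f)).subtype ∘ₗ (LinearMap.ker φ).subtype)
        (fun x => by
          have := x.2
          rw [LinearMap.mem_ker] at this ⊢
          exact congrArg Subtype.val this)
    apply LinearMap.finrank_le_finrank_of_injective (f := ψ)
    intro x y hxy
    exact Subtype.ext (Subtype.ext (by simpa [ψ] using congrArg Subtype.val hxy))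
  omega

/-- The block operator `β ↦ a σ(β)`. -/
noncomputable def skewD {K L : Type*} [Field K] [Field L] [Algebra K L] (σ : L ≃ₐ[K] L) (a : L) :
    Module.End K L := (LinearMap.mulLeft K a) ∘ₗ σ.toLinearMap

/-- Evaluate a skew polynomial with coefficients `f s`, `s < k`, at an operator. -/
noncomputable def skewOp {K L : Type*} [Field K] [Field L] [Algebra K L] (k : ℕ) (f : ℕ → L)
    (D : Module.End K L) : Module.End K L :=
  ∑ s ∈ Finset.range k, (LinearMap.mulLeft K (f s)) * D ^ s

theorem skewD_apply {K L : Type*} [Field K] [Field L] [Algebra K L] (σ : L ≃ₐ[K] L) (a x : L) :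
    skewD σ a x = a * σ x := rfl

theorem skewD_pow_mul {K L : Type*} [Field K] [Field L] [Algebra K L] (σ : L ≃ₐ[K] L) (a c : L)
    (r : ℕ) : (skewD σ a) ^ r * LinearMap.mulLeft K c =
      LinearMap.mulLeft K ((σ ^ r) c) * (skewD σ a) ^ r := by
  induction r with
  | zero => simp
  | succ r ih =>
    rw [pow_succ', mul_assoc, ih, ← mul_assoc, ← mul_assoc]
    congr 1
    ext x
    simp only [Module.End.mul_apply, skewD_apply, LinearMap.mulLeft_apply, map_mul, pow_succ',
      AlgEquiv.mul_apply]
    ring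

theorem skew_div {K L : Type*} [Field K] [Field L] [Algebra K L] (σ : L ≃ₐ[K] L) (c : L)
    (r : ℕ) : ∀ f : ℕ → L, ∃ (g : ℕ → L) (ρ : L), g r = f (r + 1) ∧ ∀ a : L,
      skewOp (r + 2) f (skewD σ a) = skewOp (r + 1) g (skewD σ a) *
        (skewD σ a - LinearMap.mulLeft K c) + LinearMap.mulLeft K ρ := by
  induction r with
  | zero =>
    intro f
    refine ⟨fun _ => f 1, f 0 + f 1 * c, rfl, fun a => ?_⟩
    ext x
    simp [skewOp, Finset.sum_range_succ]
    ring
  | succ r ih =>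
    intro f
    obtain ⟨g, ρ, -, hg⟩ := ih (Function.update f (r + 1) (f (r + 1) + f (r + 2) * (σ ^ (r + 1)) c))
    refine ⟨Function.update g (r + 1) (f (r + 2)), ρ, by simp, fun a => ?_⟩
    have key := hg a
    have e1 : skewOp (r + 2) (Function.update f (r + 1) (f (r + 1) + f (r + 2) * (σ ^ (r + 1)) c))
        (skewD σ a) = skewOp (r + 2) f (skewD σ a) +
          LinearMap.mulLeft K (f (r + 2) * (σ ^ (r + 1)) c) * (skewD σ a) ^ (r + 1) := by
      unfold skewOp
      rw [Finset.sum_range_succ, Finset.sum_range_succ _ (r + 1)]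
      rw [Finset.sum_congr rfl (g := fun s => LinearMap.mulLeft K (f s) * skewD σ a ^ s)]
      · rw [Function.update_self, add_assoc, ← add_mul]
        congr 2
        ext x
        simp [add_mul, mul_assoc]
      · intro s hs
        rw [Function.update_of_ne (by have := Finset.mem_range.1 hs; omega)]
    have e2 : skewOp (r + 2) (Function.update g (r + 1) (f (r + 2))) (skewD σ a) =
        skewOp (r + 1) g (skewD σ a) + LinearMap.mulLeft K (f (r + 2)) * skewD σ a ^ (r + 1) := by
      unfold skewOp
      rw [Finset.sum_range_succ, Function.update_self]
      congr 1
      refine Finset.sum_congr rfl fun s hs => ?_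
      rw [Function.update_of_ne (by have := Finset.mem_range.1 hs; omega)]
    have e3 : skewOp (r + 1 + 2) f (skewD σ a) = skewOp (r + 2) f (skewD σ a) +
        LinearMap.mulLeft K (f (r + 2)) * skewD σ a ^ (r + 2) := by
      unfold skewOp
      rw [Finset.sum_range_succ]
    have e4 : LinearMap.mulLeft K (f (r + 2) * (σ ^ (r + 1)) c) =
        LinearMap.mulLeft K (f (r + 2)) * LinearMap.mulLeft K ((σ ^ (r + 1)) c) := by
      ext x; simp
    rw [e1, e4, mul_assoc, ← skewD_pow_mul] at key
    rw [e3, e2, add_mul, add_right_comm, ← key]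
    rw [pow_succ _ (r + 1)]
    simp only [mul_sub, mul_assoc]
    abel

theorem skew_ker_bound {K L : Type*} [Field K] [Field L] [Algebra K L] [FiniteDimensional K L]
    (σ : L ≃ₐ[K] L) (hfix : ∀ x, σ x = x → x ∈ Set.range (algebraMap K L))
    {ι : Type*} [Fintype ι] [DecidableEq ι] (a : ι → L) (ha0 : ∀ i, a i ≠ 0)
    (ha : ∀ i i', Algebra.norm K (a i) = Algebra.norm K (a i') → i = i') (k : ℕ) :
    ∀ f : ℕ → L, (∃ s < k, f s ≠ 0) →
      ∑ i, Module.finrank K (LinearMap.ker (skewOp k f (skewD σ (a i)))) < k := by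
  induction k with
  | zero => rintro f ⟨s, hs, -⟩; omega
  | succ k ih =>
    rintro f ⟨s, hs, hfs⟩
    by_cases hk : f k = 0
    · have e : ∀ D : Module.End K L, skewOp (k + 1) f D = skewOp k f D := by
        intro D
        unfold skewOp
        rw [Finset.sum_range_succ, hk]
        simp
      have e' : ∑ i, Module.finrank K (LinearMap.ker (skewOp (k + 1) f (skewD σ (a i)))) =
          ∑ i, Module.finrank K (LinearMap.ker (skewOp k f (skewD σ (a i)))) :=
        Finset.sum_congr rfl fun i _ => by rw [e]
      rw [e']
      have : s < k := by
        rcases Nat.lt_succ_iff_lt_or_eq.1 hs with h | h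
        · exact h
        · subst h; exact absurd hk hfs
      exact (ih f ⟨s, this, hfs⟩).trans (Nat.lt_succ_self k)
    by_cases hz : ∀ i, LinearMap.ker (skewOp (k + 1) f (skewD σ (a i))) = ⊥
    · rw [Finset.sum_eq_zero]
      · omega
      · intro i _
        rw [hz i]; simp
    push Not at hz
    obtain ⟨i₀, hi₀⟩ := hz
    obtain ⟨β, hβ, hβ0⟩ := Submodule.exists_mem_ne_zero_of_ne_bot hi₀
    rw [LinearMap.mem_ker] at hβ
    cases k with
    | zero =>
      simp [skewOp, hk, hβ0] at hβ
    | succ r =>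
      set c := a i₀ * σ β / β with hc
      obtain ⟨g, ρ, hgr, hg⟩ := skew_div σ c r f
      have hker : (skewD σ (a i₀) - LinearMap.mulLeft K c) β = 0 := by
        simp [skewD_apply, hc, hβ0]
      have hρ : ρ = 0 := by
        rw [hg, LinearMap.add_apply, Module.End.mul_apply, hker] at hβ
        simpa [hβ0] using hβ
      have hgb := ih g ⟨r, by omega, by rw [hgr]; exact hk⟩
      have hne : ∀ x, σ x ≠ 0 ↔ x ≠ 0 := fun x => by simp
      have hone : ∀ i, Module.finrank K (LinearMap.ker (skewD σ (a i) - LinearMap.mulLeft K c)) ≤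
          if i = i₀ then 1 else 0 := by
        intro i
        split_ifs with hi
        · subst hi
          apply finrank_le_one (⟨β, hker⟩ : LinearMap.ker _)
          rintro ⟨γ, hγ⟩
          simp only [LinearMap.mem_ker, LinearMap.sub_apply, skewD_apply, LinearMap.mulLeft_apply,
            sub_eq_zero] at hγ
          obtain ⟨u, hu⟩ := hfix (γ / β) (by
            have h1 := ha0 i
            have h2 : σ β ≠ 0 := (hne β).2 hβ0
            rw [map_div₀, div_eq_div_iff h2 hβ0]
            rw [hc] at hγ
            field_simp at hγ
            linear_combination hγ)
          refine ⟨u, Subtype.ext ?_⟩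
          simp only [SetLike.val_smul, Algebra.smul_def, hu]
          field_simp
        · rw [Nat.le_zero, Submodule.finrank_eq_zero, Submodule.eq_bot_iff]
          intro γ hγ
          by_contra hγ0
          apply hi
          simp only [LinearMap.mem_ker, LinearMap.sub_apply, skewD_apply, LinearMap.mulLeft_apply,
            sub_eq_zero] at hγ
          have h3 : a i * σ γ * β = a i₀ * σ β * γ := by
            rw [hγ, hc]; field_simp
          have h4 := congrArg (Algebra.norm K) h3
          have hn : ∀ x, Algebra.norm K (σ x) = Algebra.norm K x := fun x => by
            exact (Algebra.norm_eq_of_algEquiv σ x)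
          simp only [map_mul, hn] at h4
          have h5 : Algebra.norm K γ ≠ 0 := Algebra.norm_ne_zero_iff.2 hγ0
          have h6 : Algebra.norm K β ≠ 0 := Algebra.norm_ne_zero_iff.2 hβ0
          apply ha
          apply mul_right_cancel₀ (mul_ne_zero h5 h6)
          linear_combination h4
      calc ∑ i, Module.finrank K (LinearMap.ker (skewOp (r + 1 + 1) f (skewD σ (a i))))
          ≤ ∑ i, (Module.finrank K (LinearMap.ker (skewOp (r + 1) g (skewD σ (a i)))) +
              if i = i₀ then 1 else 0) := by
            refine Finset.sum_le_sum fun i _ => ?_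
            have : skewOp (r + 1 + 1) f (skewD σ (a i)) = skewOp (r + 1) g (skewD σ (a i)) ∘ₗ
              (skewD σ (a i) - LinearMap.mulLeft K c) := by
              rw [hg, hρ]
              ext x
              simp
            rw [this]
            exact (aux_ker_comp _ _).trans (Nat.add_le_add_left (hone i) _)
        _ < r + 1 + 1 := by
            rw [Finset.sum_add_distrib]
            simp
            omega

/-- Extension by zero of a finite family. -/
noncomputable def extZ {L : Type*} [Field L] (N : ℕ) (f : Fin N → L) (s : ℕ) : L :=
  if hs : s < N then f ⟨s, hs⟩ else 0

/-- Messages supported on the first `k` coordinates. -/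
noncomputable def msgSub (K : Type*) (L : Type*) [Field K] [Field L] [Algebra K L] (N k : ℕ) :
    Submodule K (Fin N → L) where
  carrier := {f | ∀ s : Fin N, k ≤ s.1 → f s = 0}
  zero_mem' := fun _ _ => rfl
  add_mem' := fun {x y} hx hy s hs => by simp [hx s hs, hy s hs]
  smul_mem' := fun c x hx s hs => by simp [hx s hs]

theorem finrank_msgSub (K : Type*) (L : Type*) [Field K] [Field L] [Algebra K L]
    [FiniteDimensional K L] (N k : ℕ) (hk : k ≤ N) :
    Module.finrank K (msgSub K L N k) = k * Module.finrank K L := by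
  let e : msgSub K L N k ≃ₗ[K] (Fin k → L) :=
    { toFun := fun f s => f.1 (Fin.castLE hk s)
      map_add' := fun _ _ => rfl
      map_smul' := fun _ _ => rfl
      invFun := fun g => ⟨fun s => extZ k g s.1, fun s hs => by
        simp [extZ, hs]⟩
      left_inv := fun f => by
        apply Subtype.ext
        funext s
        by_cases hs : s.1 < k
        · simp [extZ, hs]
        · simp only [extZ, hs, dite_false]
          exact (f.2 s (not_lt.1 hs)).symm
      right_inv := fun g => by
        funext s
        simp [extZ] }
  rw [e.finrank_eq, Module.finrank_pi_fintype]
  simp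

/-- The operator-valued evaluation of messages. -/
noncomputable def msgOp {K L : Type*} [Field K] [Field L] [Algebra K L] (N : ℕ)
    (D : Module.End K L) : (Fin N → L) →ₗ[K] Module.End K L where
  toFun f := skewOp N (extZ N f) D
  map_add' f g := by
    unfold skewOp
    rw [← Finset.sum_add_distrib]
    refine Finset.sum_congr rfl fun s hs => ?_
    ext x
    simp [extZ, Finset.mem_range.1 hs, add_mul]
  map_smul' c f := by
    unfold skewOp
    rw [Finset.smul_sum]
    refine Finset.sum_congr rfl fun s hs => ?_
    ext x
    simp [extZ, Finset.mem_range.1 hs]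

theorem msgOp_eq {K L : Type*} [Field K] [Field L] [Algebra K L] (N k : ℕ) (hk : k ≤ N)
    (D : Module.End K L) (f : Fin N → L) (hf : f ∈ msgSub K L N k) :
    msgOp N D f = skewOp k (extZ N f) D := by
  change skewOp N (extZ N f) D = skewOp k (extZ N f) D
  unfold skewOp
  symm
  apply Finset.sum_subset (Finset.range_mono hk)
  intro s hs hs'
  have h1 := Finset.mem_range.1 hs
  have h2 : k ≤ s := by simpa using hs'
  have : extZ N f s = 0 := by
    simp only [extZ, h1, dite_true]
    exact hf ⟨s, h1⟩ h2
  rw [this]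
  ext x
  simp

/-- Matrix of a sandwiched operator, linearly in the operator. -/
noncomputable def sandwich {K L : Type*} [Field K] [Field L] [Algebra K L] {a b : ℕ}
    (E : L →ₗ[K] (Fin a → K)) (A : (Fin b → K) →ₗ[K] L) :
    Module.End K L →ₗ[K] Matrix (Fin a) (Fin b) K where
  toFun T := LinearMap.toMatrix' (E ∘ₗ T ∘ₗ A)
  map_add' S T := by rw [← map_add]; congr 1; ext x; simp
  map_smul' c T := by
    rw [RingHom.id_apply, ← map_smul]; congr 1; ext x; simp

theorem sandwich_rank_lower {K L : Type*} [Field K] [Field L] [Algebra K L]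
    [FiniteDimensional K L] {a b : ℕ}
    (E : L →ₗ[K] (Fin a → K)) (A : (Fin b → K) →ₗ[K] L) (hE : Function.Injective E)
    (hA : Function.Injective A) (T : Module.End K L) :
    b ≤ (sandwich E A T).rank + Module.finrank K (LinearMap.ker T) := by
  have h1 : (sandwich E A T).rank = Module.finrank K (LinearMap.range (E ∘ₗ T ∘ₗ A)) := by
    change (LinearMap.toMatrix' (E ∘ₗ T ∘ₗ A)).rank = _
    rw [Matrix.rank]
    rw [← Matrix.toLin'_apply', Matrix.toLin'_toMatrix']
  have h2 := LinearMap.finrank_range_add_finrank_ker (E ∘ₗ T ∘ₗ A)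
  rw [Module.finrank_fin_fun] at h2
  have h3 := aux_ker_comp E (T ∘ₗ A)
  have h4 := aux_ker_comp T A
  rw [LinearMap.ker_eq_bot.2 hE, finrank_bot] at h3
  rw [LinearMap.ker_eq_bot.2 hA, finrank_bot] at h4
  omega

theorem rank_le_of_cols {K : Type*} [Field K] {a b : ℕ} (B : Matrix (Fin a) (Fin b) K)
    (S : Finset (Fin b)) (hS : ∀ c ∈ S, ∀ r, B r c = 0) : B.rank + S.card ≤ b := by
  classical
  rw [Matrix.rank_eq_finrank_span_cols]
  have h1 : Submodule.span K (Set.range B.col) ≤ Submodule.span K ((Sᶜ.image B.col : Finset _) : Set (Fin a → K)) := by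
    rw [Submodule.span_le]
    rintro _ ⟨c, rfl⟩
    by_cases hc : c ∈ S
    · have : B.col c = 0 := by
        funext r; exact hS c hc r
      rw [this]; exact Submodule.zero_mem _
    · apply Submodule.subset_span
      simp only [Finset.coe_image, Set.mem_image]
      exact ⟨c, by simpa using hc, rfl⟩
  have h2 := Submodule.finrank_mono h1
  have h3 := finrank_span_finset_le_card (R := K) (Sᶜ.image B.col)
  rw [Set.finrank] at h3
  have h4 : (Sᶜ.image B.col).card ≤ Sᶜ.card := Finset.card_image_le
  have h5 := Finset.card_compl_add_card S
  rw [Fintype.card_fin] at h5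
  omega

theorem exists_field_ext (K : Type*) [Field K] [Finite K] (M : ℕ) (hM : 0 < M) :
    ∃ (L : Type) (_ : Field L) (_ : Algebra K L) (_ : FiniteDimensional K L) (_ : Finite L),
      Module.finrank K L = M := by
  obtain ⟨p, hp⟩ := CharP.exists K
  have : Fact p.Prime := ⟨(CharP.char_is_prime_or_zero K p).resolve_right
    (CharP.char_ne_zero_of_finite K p)⟩
  have : NeZero M := ⟨hM.ne'⟩
  exact ⟨FiniteField.Extension K p M, inferInstance, inferInstance, inferInstance, inferInstance,
    FiniteField.finrank_extension K p M⟩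

/-- First blocks: an injective message encoding all of whose nonzero words have full rank. -/
theorem exists_full_block {K V : Type*} [Field K] [Finite K] [AddCommGroup V] [Module K V]
    [FiniteDimensional K V] (a b : ℕ) (hb : b ≤ a) (ha : 0 < a)
    (hV : Module.finrank K V ≤ a) :
    ∃ φ : V →ₗ[K] Matrix (Fin a) (Fin b) K, ∀ f, f ≠ 0 → (φ f).rank = b := by
  obtain ⟨L, _, _, _, _, hL⟩ := exists_field_ext K a ha
  obtain ⟨ι, hι⟩ := aux_exists_inj (K := K) (V := V) (W := L) (by omega)
  obtain ⟨E, hE⟩ := aux_exists_inj (K := K) (V := L) (W := Fin a → K) (by simp [hL])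
  obtain ⟨A, hA⟩ := aux_exists_inj (K := K) (V := Fin b → K) (W := L) (by simp [hL, hb])
  refine ⟨sandwich E A ∘ₗ LinearMap.mul K L ∘ₗ ι, fun f hf => ?_⟩
  have h1 := sandwich_rank_lower E A hE hA (LinearMap.mul K L (ι f))
  have h0 : ι f ≠ 0 := by
    intro h; exact hf (hι (by rw [h, map_zero]))
  have h2 : LinearMap.ker (LinearMap.mul K L (ι f)) = ⊥ := by
    rw [Submodule.eq_bot_iff]
    intro x hx
    simpa [h0] using hx
  rw [h2, finrank_bot] at h1
  apply le_antisymm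
  · exact (Matrix.rank_le_card_width _).trans (by simp)
  · simpa using h1

theorem exists_linRS {K : Type*} [Field K] [Fintype K] (M N : ℕ) (hM : 0 < M) {ι : Type*}
    [Fintype ι] (hcard : Fintype.card ι < Fintype.card K) (m n : ι → ℕ)
    (hn : ∀ i, n i ≤ M) (hm : ∀ i, M ≤ m i) (hN : N ≤ ∑ i, n i) :
    ∃ (L : Type) (_ : Field L) (_ : Algebra K L) (_ : FiniteDimensional K L),
      Module.finrank K L = M ∧
      ∃ ψ : ∀ i, (Fin N → L) →ₗ[K] Matrix (Fin (m i)) (Fin (n i)) K,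
        ∀ k, 1 ≤ k → k ≤ N →
          (∀ f ∈ msgSub K L N k, f ≠ 0 → ∑ i, n i + 1 ≤ ∑ i, (ψ i f).rank + k) ∧
          ∃ f ∈ msgSub K L N k, f ≠ 0 ∧ ∑ i, (ψ i f).rank + k ≤ ∑ i, n i + 1 := by
  classical
  obtain ⟨L, _, _, _, _, hL⟩ := exists_field_ext K M hM
  refine ⟨L, inferInstance, inferInstance, inferInstance, hL, ?_⟩
  let σ := FiniteField.frobeniusAlgEquivOfAlgebraic K L
  have hfix : ∀ x, σ x = x → x ∈ Set.range (algebraMap K L) := by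
    intro x hx
    rw [IsGalois.mem_range_algebraMap_iff_fixed]
    intro g
    obtain ⟨r, rfl⟩ := (FiniteField.bijective_frobeniusAlgEquivOfAlgebraic_pow K L).2 g
    change (σ ^ r.1) x = x
    rw [AlgEquiv.coe_pow]
    exact Function.iterate_fixed hx _
  have hcard' : Fintype.card ι ≤ Fintype.card Kˣ := by
    rw [Fintype.card_units]; omega
  obtain ⟨u⟩ := Function.Embedding.nonempty_of_card_le hcard'
  choose a ha using fun i => FiniteField.norm_surjective K L (u i : K)
  have ha0 : ∀ i, a i ≠ 0 := by
    intro i hi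
    have := ha i
    rw [hi, Algebra.norm_zero] at this
    exact (u i).ne_zero this.symm
  have hainj : ∀ i i', Algebra.norm K (a i) = Algebra.norm K (a i') → i = i' := by
    intro i i' hii
    rw [ha, ha] at hii
    exact u.injective (Units.ext hii)
  choose E hE using fun i => aux_exists_inj (K := K) (V := L) (W := Fin (m i) → K)
    (by simp [hL, hm i])
  choose A hA using fun i => aux_exists_inj (K := K) (V := Fin (n i) → K) (W := L)
    (by simp [hL, hn i])
  refine ⟨fun i => sandwich (E i) (A i) ∘ₗ msgOp N (skewD σ (a i)), fun k hk1 hkN => ⟨?_, ?_⟩⟩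
  · intro f hf hf0
    have hex : ∃ s < k, extZ N f s ≠ 0 := by
      by_contra hcon
      push Not at hcon
      apply hf0
      funext s
      by_cases hs : s.1 < k
      · have := hcon s.1 hs
        simpa [extZ] using this
      · exact hf s (not_lt.1 hs)
    have h1 := skew_ker_bound σ hfix a ha0 hainj k (extZ N f) hex
    have h2 : ∑ i, n i ≤ ∑ i, ((sandwich (E i) (A i) (msgOp N (skewD σ (a i)) f)).rank +
        Module.finrank K (LinearMap.ker (skewOp k (extZ N f) (skewD σ (a i))))) := by
      refine Finset.sum_le_sum fun i _ => ?_
      rw [msgOp_eq N k hkN _ f hf]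
      exact sandwich_rank_lower _ _ (hE i) (hA i) _
    rw [Finset.sum_add_distrib] at h2
    simp only [LinearMap.comp_apply]
    omega
  · have hS : k - 1 ≤ (Finset.univ : Finset (Σ i, Fin (n i))).card := by
      simp; omega
    obtain ⟨S, -, hS⟩ := Finset.exists_subset_card_eq hS
    let Φ : msgSub K L N k →ₗ[K] (S → L) := LinearMap.pi fun p =>
      (LinearMap.applyₗ (A p.1.1 (Pi.single p.1.2 1))) ∘ₗ msgOp N (skewD σ (a p.1.1)) ∘ₗ
        (msgSub K L N k).subtype
    have hΦ : LinearMap.ker Φ ≠ ⊥ := by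
      apply LinearMap.ker_ne_bot_of_finrank_lt
      rw [finrank_msgSub K L N k hkN, Module.finrank_pi_fintype]
      simp only [Finset.sum_const, Finset.card_univ, Fintype.card_coe, hS, hL, smul_eq_mul]
      exact Nat.mul_lt_mul_of_pos_right (by omega) hM
    obtain ⟨f, hf, hf0⟩ := Submodule.exists_mem_ne_zero_of_ne_bot hΦ
    refine ⟨f.1, f.2, fun h => hf0 (Subtype.ext h), ?_⟩
    have h1 : ∀ p ∈ S, msgOp N (skewD σ (a p.1)) f.1 (A p.1 (Pi.single p.2 1)) = 0 := by
      intro p hp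
      exact congrFun (LinearMap.mem_ker.1 hf) ⟨p, hp⟩
    let Si : ∀ i, Finset (Fin (n i)) := fun i => Finset.univ.filter fun c => (⟨i, c⟩ : Σ i, Fin (n i)) ∈ S
    have h2 : ∑ i, (Si i).card = S.card := by
      rw [← Finset.card_sigma]
      congr 1
      ext ⟨i, c⟩
      simp [Si]
    have h3 : ∑ i, ((sandwich (E i) (A i) (msgOp N (skewD σ (a i)) f.1)).rank + (Si i).card) ≤
        ∑ i, n i := by
      refine Finset.sum_le_sum fun i _ => ?_
      apply rank_le_of_cols
      intro c hc r
      have := h1 ⟨i, c⟩ (by simpa [Si] using hc)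
      change LinearMap.toMatrix' (E i ∘ₗ (msgOp N (skewD σ (a i)) f.1) ∘ₗ A i) r c = 0
      rw [LinearMap.toMatrix'_apply]
      simp only [LinearMap.comp_apply]
      rw [this]
      simp
    rw [Finset.sum_add_distrib] at h3
    simp only [LinearMap.comp_apply]
    omega

theorem sum_Iio_add_sum_Ici {t : ℕ} (n : Fin t → ℕ) (j : Fin t) :
    ∑ i ∈ Finset.Iio j, n i + ∑ i ∈ Finset.Ici j, n i = ∑ i, n i := by
  classical
  rw [← Finset.sum_union]
  · congr 1
    ext i
    simp [lt_or_ge]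
  · rw [Finset.disjoint_left]
    intro i hi hi'
    simp at hi hi'
    exact absurd hi (not_lt.2 hi')

theorem exists_position {t : ℕ} (n : Fin t → ℕ) (j : Fin t) (i : ℕ)
    (hi : ∑ l ∈ Finset.Iio j, n l < i) (hi' : i ≤ ∑ l, n l) :
    ∃ j' : Fin t, j ≤ j' ∧ ∃ δ' : ℕ, δ' + 1 ≤ n j' ∧ i = ∑ l ∈ Finset.Iio j', n l + δ' + 1 := by
  classical
  let S : Finset (Fin t) := Finset.univ.filter fun l => ∑ x ∈ Finset.Iio l, n x < i
  have hjS : j ∈ S := by simp [S, hi]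
  have hne : S.Nonempty := ⟨j, hjS⟩
  set j' := S.max' hne with hj'
  have h1 : j ≤ j' := S.le_max' j hjS
  have h2 : ∑ x ∈ Finset.Iio j', n x < i := by
    have := S.max'_mem hne
    simpa [S] using this
  have h3 : i ≤ ∑ x ∈ Finset.Iio j', n x + n j' := by
    have e : ∑ x ∈ Finset.Iio j', n x + n j' = ∑ x ∈ Finset.Iic j', n x := by
      rw [← Finset.Iio_insert, Finset.sum_insert (by simp), add_comm]
    rw [e]
    by_cases hl : j'.1 + 1 < t
    · by_contra hcon
      have hm : (⟨j'.1 + 1, hl⟩ : Fin t) ∈ S := by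
        simp only [S, Finset.mem_filter, Finset.mem_univ, true_and]
        have : Finset.Iio (⟨j'.1 + 1, hl⟩ : Fin t) = Finset.Iic j' := by
          ext x
          simp only [Finset.mem_Iio, Finset.mem_Iic, Fin.lt_def, Fin.le_def]
          omega
        rw [this]
        omega
      have := S.le_max' _ hm
      rw [← hj', Fin.le_def] at this
      simp only at this
      omega
    · have : Finset.Iic j' = Finset.univ := by
        ext x
        simp only [Finset.mem_Iic, Finset.mem_univ, iff_true, Fin.le_def]
        omega
      rw [this]
      exact hi'
  exact ⟨j', h1, i - ∑ x ∈ Finset.Iio j', n x - 1, by omega, by omega⟩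

/-- Let `j = min {i ∈ [t] : m i = m t}` and `d = n_1 + ⋯ + n_{j-1} + δ + 1` with
`0 ≤ δ ≤ n j - 1`. Let `h = max {i ∈ [t] : n i > m t}`, assumed to exist, and assume
`m h ≥ m t * (n_j + ⋯ + n_t - δ)`. If `q > t - h`, then there is a chain of MSRD codes
`𝒞_n ⊆ ⋯ ⊆ 𝒞_{d+1} ⊆ 𝒞_d ⊆ 𝕄` with `d(𝒞_i) = i` for all `d ≤ i ≤ n`. -/
theorem exists_MSRD_chain_II (ht : 0 < t)
    (hm_mono : ∀ i j : Fin t, i ≤ j → m j ≤ m i)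
    (hn_pos : ∀ i, 0 < n i) (hmn : ∀ i, n i ≤ m i)
    (j : Fin t) (hj_eq : m j = m ⟨t - 1, Nat.sub_lt ht Nat.one_pos⟩)
    (hj_min : ∀ i : Fin t, m i = m ⟨t - 1, Nat.sub_lt ht Nat.one_pos⟩ → j ≤ i)
    (δ : ℕ) (hδ : δ + 1 ≤ n j)
    (h : Fin t) (hh_gt : m ⟨t - 1, Nat.sub_lt ht Nat.one_pos⟩ < n h)
    (hh_max : ∀ i : Fin t, m ⟨t - 1, Nat.sub_lt ht Nat.one_pos⟩ < n i → i ≤ h)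
    (hmh : m ⟨t - 1, Nat.sub_lt ht Nat.one_pos⟩ * (∑ i ∈ Finset.Ici j, n i - δ) ≤ m h)
    (hq : t - (h.1 + 1) < Fintype.card F) :
    ∃ 𝒞 : ℕ → Submodule F (∀ i : Fin t, Matrix (Fin (m i)) (Fin (n i)) F),
      (∀ i, ∑ l ∈ Finset.Iio j, n l + δ + 1 ≤ i → i < ∑ l, n l → 𝒞 (i + 1) ≤ 𝒞 i) ∧
      (∀ i, ∑ l ∈ Finset.Iio j, n l + δ + 1 ≤ i → i ≤ ∑ l, n l →
        IsMSRD (𝒞 i) ∧ minDist (𝒞 i) = i) := by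
  classical
  set M := m ⟨t - 1, Nat.sub_lt ht Nat.one_pos⟩ with hMdef
  set N := ∑ i ∈ Finset.Ici j, n i - δ with hNdef
  have hMle : ∀ i, M ≤ m i := fun i => hm_mono _ _ (by rw [Fin.le_def]; simp; omega)
  have hM : 0 < M := (hn_pos _).trans_le (hmn _)
  have hhj : h < j := by
    by_contra hcon
    have h1 := hm_mono j h (not_lt.1 hcon)
    have h2 := hmn h
    omega
  have hmj : ∀ i, j ≤ i → m i = M := fun i hi =>
    le_antisymm (hj_eq ▸ hm_mono j i hi) (hMle i)
  have hsplit := sum_Iio_add_sum_Ici n j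
  have hnj : n j ≤ ∑ i ∈ Finset.Ici j, n i :=
    Finset.single_le_sum (f := n) (fun _ _ => Nat.zero_le _) (by simp)
  -- the last blocks
  have hcard : Fintype.card {i : Fin t // h < i} < Fintype.card F := by
    refine lt_of_eq_of_lt ?_ hq
    rw [Fintype.card_subtype]
    have : (Finset.univ.filter fun i : Fin t => h < i) = Finset.Ioi h := by ext; simp
    rw [this, Fin.card_Ioi]
    omega
  have hNle : N ≤ ∑ i : {i : Fin t // h < i}, n i := by
    have h1 : ∑ i ∈ Finset.Ici j, n i ≤ ∑ i ∈ Finset.univ.filter (fun i => h < i), n i := by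
      apply Finset.sum_le_sum_of_subset
      intro i hi
      simp at hi ⊢
      exact hhj.trans_le hi
    have h2 : ∑ i ∈ Finset.univ.filter (fun i => h < i), n i =
        ∑ i : {i : Fin t // h < i}, n i := by
      rw [← Finset.sum_subtype_eq_sum_filter]
      simp
    omega
  obtain ⟨L, _, _, _, hL, ψ, hψ⟩ := exists_linRS (K := F) M N hM hcard (fun i => m i.1)
    (fun i => n i.1) (fun i => by
      by_contra hcon
      exact absurd i.2 (not_lt.2 (hh_max i.1 (not_le.1 hcon)))) (fun i => hMle i.1) hNle
  have hV : Module.finrank F (Fin N → L) = M * N := by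
    rw [Module.finrank_pi_fintype]
    simp [hL, mul_comm]
  choose φ hφ using fun i : {i : Fin t // ¬ h < i} =>
    exists_full_block (K := F) (V := Fin N → L) (m i.1) (n i.1) (hmn i.1)
      (hM.trans_le (hMle i.1)) (by
        rw [hV]; exact hmh.trans (hm_mono _ _ (not_lt.1 i.2)))
  let enc : (Fin N → L) →ₗ[F] (∀ i : Fin t, Matrix (Fin (m i)) (Fin (n i)) F) :=
    LinearMap.pi fun i => if hi : h < i then ψ ⟨i, hi⟩ else φ ⟨i, hi⟩
  have henc1 : ∀ (f) (i : {i : Fin t // h < i}), enc f i.1 = ψ i f := by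
    intro f i
    simp [enc, i.2]
  have henc2 : ∀ (f) (i : {i : Fin t // ¬ h < i}), enc f i.1 = φ i f := by
    intro f i
    have := i.2
    simp only [enc, LinearMap.pi_apply, this, dite_false]
  have hn_sum := Fintype.sum_subtype_add_sum_subtype (fun i : Fin t => h < i) n
  have hsrk : ∀ f, f ≠ 0 → srk (enc f) =
      ∑ i : {i : Fin t // h < i}, (ψ i f).rank + ∑ i : {i : Fin t // ¬ h < i}, n i.1 := by
    intro f hf
    unfold srk
    rw [← Fintype.sum_subtype_add_sum_subtype (fun i : Fin t => h < i)]
    congr 1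
    · exact Finset.sum_congr rfl fun i _ => by rw [henc1]
    · exact Finset.sum_congr rfl fun i _ => by rw [henc2, hφ i f hf]
  have hinj : Function.Injective enc := by
    rw [← LinearMap.ker_eq_bot, Submodule.eq_bot_iff]
    intro f hf
    by_contra hf0
    have h1 := hφ ⟨h, lt_irrefl h⟩ f hf0
    rw [← henc2, LinearMap.mem_ker.1 hf] at h1
    simp at h1
    have := hn_pos h
    omega
  have hmain : ∀ i, ∑ l ∈ Finset.Iio j, n l + δ + 1 ≤ i → i ≤ ∑ l, n l →
      minDist ((msgSub F L N (∑ l, n l + 1 - i)).map enc) = i := by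
    intro i hi1 hi2
    obtain ⟨hlow, f, hf, hf0, hup⟩ := hψ (∑ l, n l + 1 - i) (by omega) (by omega)
    have hlow' := hlow f hf hf0
    apply IsLeast.csInf_eq
    refine ⟨⟨enc f, Submodule.mem_map_of_mem hf, ?_, ?_⟩, ?_⟩
    · intro h0
      exact hf0 (hinj (by rw [h0, map_zero]))
    · rw [hsrk f hf0]
      omega
    · rintro w ⟨C, hC, hC0, rfl⟩
      obtain ⟨g, hg, rfl⟩ := Submodule.mem_map.1 hC
      have hg0 : g ≠ 0 := by
        rintro rfl
        exact hC0 (map_zero _)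
      have := hlow g hg hg0
      rw [hsrk g hg0]
      omega
  refine ⟨fun i => (msgSub F L N (∑ l, n l + 1 - i)).map enc, ?_, ?_⟩
  · intro i _ _
    apply Submodule.map_mono
    intro f hf s hs
    exact hf s (by omega)
  · intro i hi1 hi2
    refine ⟨?_, hmain i hi1 hi2⟩
    obtain ⟨j', hjj', δ', hδ', hi⟩ := exists_position n j i (by omega) hi2
    refine ⟨j', δ', hδ', (hmain i hi1 hi2).trans hi, ?_⟩
    rw [← (Submodule.equivMapOfInjective enc hinj _).finrank_eq,
      finrank_msgSub F L N _ (by omega), hL, hmj j' hjj']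
    have h1 : ∑ l ∈ Finset.Ici j', m l * n l = (∑ l ∈ Finset.Ici j', n l) * M := by
      rw [Finset.sum_mul]
      refine Finset.sum_congr rfl fun l hl => ?_
      rw [hmj l (hjj'.trans (Finset.mem_Ici.1 hl)), mul_comm]
    rw [h1, ← add_mul]
    have := sum_Iio_add_sum_Ici n j'
    congr 1
    omega
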